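/- arXiv:2602.06934 — 5 statements merged into one kernel-verified Lean document; each statement's English description precedes it below -/
import Mathlib

section
/- Every transactions-based protocol is oblivious: if S is a local-states function, R a set of transactions over S, and F the transactions-based protocol over R and S with transition sets T(P) = R(P)↑P, then for all nonempty finite sets of agents P ⊊ P', T(P)↑P' ⊆ T(P'). -/
/-- An (atomic) transaction: a pair of distinct configurations over a nonempty
finite set `Q` of participant agents. -/
structure Txn (𝒜 𝒮 : Type*) where
  Q : Finset 𝒜
  hQ : Q.Nonempty
  c : {a // a ∈ Q} → 𝒮
  c' : {a // a ∈ Q} → 𝒮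
  hne : c ≠ c'

/-- The `P`-closure of a pair `cc = (c, c')` of configurations over participants `Q`:
the set of pairs `(d, d')` of configurations over `P` (with values in `S`) such that
`d` and `d'` agree with `c` and `c'` respectively on `Q`, and `d p = d' p` for every
`p ∈ P \ Q`. (Empty unless `Q ⊆ P`.) -/
def upClosure {𝒜 𝒮 : Type*} (S : Set 𝒮) (Q : Finset 𝒜)
    (cc : ({a // a ∈ Q} → 𝒮) × ({a // a ∈ Q} → 𝒮)) (P : Finset 𝒜) :
    Set (({a // a ∈ P} → 𝒮) × ({a // a ∈ P} → 𝒮)) :=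
  {dd | ∃ h : Q ⊆ P,
    (∀ p, dd.1 p ∈ S ∧ dd.2 p ∈ S) ∧
    (∀ q : {a // a ∈ Q}, dd.1 ⟨q.1, h q.2⟩ = cc.1 q ∧ dd.2 ⟨q.1, h q.2⟩ = cc.2 q) ∧
    (∀ p : {a // a ∈ P}, p.1 ∉ Q → dd.1 p = dd.2 p)}

/-- `R(P)`: the transactions in `R` whose participants `Q` satisfy `Q ⊆ P` and which
are over `S(Q')` for some `Q' ⊆ P`. -/
def RofP {𝒜 𝒮 : Type*} (SF : Finset 𝒜 → Set 𝒮) (R : Set (Txn 𝒜 𝒮)) (P : Finset 𝒜) :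
    Set (Txn 𝒜 𝒮) :=
  {t | t ∈ R ∧ t.Q ⊆ P ∧ ∃ Q' : Finset 𝒜, Q' ⊆ P ∧ t.Q ⊆ Q' ∧
    (∀ q, t.c q ∈ SF Q') ∧ (∀ q, t.c' q ∈ SF Q')}

/-- The transition set `T(P) = R(P)↑P` of the transactions-based protocol over `R`
and the local-states function `SF`. -/
def TofP {𝒜 𝒮 : Type*} (SF : Finset 𝒜 → Set 𝒮) (R : Set (Txn 𝒜 𝒮)) (P : Finset 𝒜) :
    Set (({a // a ∈ P} → 𝒮) × ({a // a ∈ P} → 𝒮)) :=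
  ⋃ t ∈ RofP SF R P, upClosure (SF P) t.Q (t.c, t.c') P

/-- Every transactions-based protocol is oblivious: if `SF` is a local-states function
(with initial state `s0`), `R` a set of transactions over `SF`, and `T(P) = R(P)↑P`
the transition sets of the transactions-based protocol over `R` and `SF`, then for all
nonempty finite sets of agents `P ⊊ P'`, `T(P)↑P' ⊆ T(P')`. -/
theorem transactionsBased_oblivious
    {𝒜 𝒮 : Type*} (s0 : 𝒮) (SF : Finset 𝒜 → Set 𝒮)
    (hs0 : ∀ P : Finset 𝒜, P.Nonempty → s0 ∈ SF P)
    (hmono : ∀ P P' : Finset 𝒜, P.Nonempty → P ⊆ P' → SF P ⊆ SF P')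
    (R : Set (Txn 𝒜 𝒮))
    (hR : ∀ t ∈ R, ∃ Q' : Finset 𝒜, t.Q ⊆ Q' ∧
      (∀ q, t.c q ∈ SF Q') ∧ (∀ q, t.c' q ∈ SF Q'))
    (P P' : Finset 𝒜) (hP : P.Nonempty) (hPP' : P ⊂ P') :
    (⋃ dd ∈ TofP SF R P, upClosure (SF P') P dd P') ⊆ TofP SF R P' := by
  intro ee hee
  simp only [TofP, Set.mem_iUnion] at hee ⊢
  obtain ⟨dd, ⟨t, ⟨htR, htQ, Q', hQ'P, hQQ', hc, hc'⟩, h1, hd1, hd2, hd3⟩, h2, he1, he2, he3⟩ := hee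
  have hsub := hPP'.subset
  refine ⟨t, ⟨htR, htQ.trans hsub, Q', hQ'P.trans hsub, hQQ', hc, hc'⟩,
    htQ.trans hsub, he1, ?_, ?_⟩
  · intro q
    have a := he2 ⟨q.1, h1 q.2⟩
    have b := hd2 q
    exact ⟨a.1.trans b.1, a.2.trans b.2⟩
  · intro p hp
    by_cases hpP : p.1 ∈ P
    · have a := he2 ⟨p.1, hpP⟩
      exact a.1.trans ((hd3 ⟨p.1, hpP⟩ hp).trans a.2.symm)
    · exact he3 p hpP
end

section
/- A transactions-based protocol over an interactive set of transactions is grassroots: if S is a local-states function and R an interactive set of transactions over S, then the transactions-based protocol over R and S is both oblivious and interactive. -/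
/-- `C(P)`: the configurations over `P` and `S(P)`. -/
def CofP {𝒜 𝒮 : Type*} (SF : Finset 𝒜 → Set 𝒮) (P : Finset 𝒜) :
    Set ({a // a ∈ P} → 𝒮) :=
  {c | ∀ p, c p ∈ SF P}

/-- The projection `c/P` of a configuration over `P'` to `P ⊆ P'`. -/
def restr {𝒜 𝒮 : Type*} {P P' : Finset 𝒜} (h : P ⊆ P') (c : {a // a ∈ P'} → 𝒮) :
    {a // a ∈ P} → 𝒮 :=
  fun p => c ⟨p.1, h p.2⟩

/-- A set `R` of transactions over the local-states function `SF` is interactive if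
for all nonempty finite `P ⊊ P'` and every configuration `c ∈ C(P')` with
`c/P ∈ C(P)`, there is a computation `c →* c'` using transitions of `R(P')↑P'` with
`c'/P ∉ C(P)`. -/
def RInteractive {𝒜 𝒮 : Type*} (SF : Finset 𝒜 → Set 𝒮) (R : Set (Txn 𝒜 𝒮)) : Prop :=
  ∀ P P' : Finset 𝒜, P.Nonempty → ∀ h : P ⊂ P', ∀ c ∈ CofP SF P',
    restr h.subset c ∈ CofP SF P →
    ∃ c', Relation.ReflTransGen (fun a b => (a, b) ∈ TofP SF R P') c c' ∧
      restr h.subset c' ∉ CofP SF P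

/-- A transactions-based protocol over an interactive set of transactions is
grassroots: if `SF` is a local-states function and `R` an interactive set of
transactions over `SF`, then the transactions-based protocol over `R` and `SF`
(with transition sets `T(P) = R(P)↑P`) is both oblivious and interactive. -/
theorem transactionsBased_interactive_grassroots
    {𝒜 𝒮 : Type*} (s0 : 𝒮) (SF : Finset 𝒜 → Set 𝒮)
    (hs0 : ∀ P : Finset 𝒜, P.Nonempty → s0 ∈ SF P)
    (hmono : ∀ P P' : Finset 𝒜, P.Nonempty → P ⊆ P' → SF P ⊆ SF P')
    (R : Set (Txn 𝒜 𝒮))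
    (hR : ∀ t ∈ R, ∃ Q' : Finset 𝒜, t.Q ⊆ Q' ∧
      (∀ q, t.c q ∈ SF Q') ∧ (∀ q, t.c' q ∈ SF Q'))
    (hint : RInteractive SF R) :
    (∀ P P' : Finset 𝒜, P.Nonempty → P ⊂ P' →
      (⋃ dd ∈ TofP SF R P, upClosure (SF P') P dd P') ⊆ TofP SF R P') ∧
    (∀ P P' : Finset 𝒜, P.Nonempty → ∀ h : P ⊂ P', ∀ c ∈ CofP SF P',
      restr h.subset c ∈ CofP SF P →
      ∃ c', Relation.ReflTransGen (fun a b => (a, b) ∈ TofP SF R P') c c' ∧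
        restr h.subset c' ∉ CofP SF P) := by
  refine ⟨?_, hint⟩
  intro P P' _ hPP' ee hee
  simp only [TofP, Set.mem_iUnion] at hee ⊢
  obtain ⟨dd, ⟨t, ⟨htR, htQ, Q', hQ'P, hQQ', hc, hc'⟩, hQP, hdS, hdQ, hdN⟩, hP, heS, heP, heN⟩ := hee
  refine ⟨t, ⟨htR, htQ.trans hP, Q', hQ'P.trans hP, hQQ', hc, hc'⟩, hQP.trans hP, heS, ?_, ?_⟩
  · intro q
    have h1 := heP ⟨q.1, hQP q.2⟩
    have h2 := hdQ q
    exact ⟨h1.1.trans h2.1, h1.2.trans h2.2⟩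
  · intro p hp
    by_cases hpP : p.1 ∈ P
    · have h1 := heP ⟨p.1, hpP⟩
      exact h1.1.trans ((hdN ⟨p.1, hpP⟩ hp).trans h1.2.symm)
    · exact heN p hpP
end

section
/- Implementation preserves obliviousness: let F be a protocol over local-states function S on state type 𝒮 (the specification) and F' a protocol over local-states function S' on state type 𝒮' (the implementation), and let f : 𝒮' → 𝒮 be an agentwise implementation mapping that is surjective on locals, a backward simulation, and a tight forward simulation. If F' is oblivious, then F is oblivious. -/
/-- A protocol with transition sets `T(P)` (over local-states function `SF`) is
oblivious if for all nonempty finite `P ⊊ P'`, `T(P)↑P' ⊆ T(P')`. -/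
def Oblivious {𝒜 𝒮 : Type*} (SF : Finset 𝒜 → Set 𝒮)
    (T : (P : Finset 𝒜) → Set (({a // a ∈ P} → 𝒮) × ({a // a ∈ P} → 𝒮))) : Prop :=
  ∀ P P' : Finset 𝒜, P.Nonempty → P ⊂ P' →
    (⋃ dd ∈ T P, upClosure (SF P') P dd P') ⊆ T P'

/-- A protocol with transition sets `T(P)` (over local-states function `SF`) is
interactive if for all nonempty finite `P ⊊ P'` and every `c ∈ C(P')` with
`c/P ∈ C(P)`, there is a computation `c →* c'` of `F(P')` with `c'/P ∉ C(P)`. -/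
def Interactive {𝒜 𝒮 : Type*} (SF : Finset 𝒜 → Set 𝒮)
    (T : (P : Finset 𝒜) → Set (({a // a ∈ P} → 𝒮) × ({a // a ∈ P} → 𝒮))) : Prop :=
  ∀ P P' : Finset 𝒜, P.Nonempty → ∀ h : P ⊂ P', ∀ c ∈ CofP SF P',
    restr h.subset c ∈ CofP SF P →
    ∃ c', Relation.ReflTransGen (fun a b => (a, b) ∈ T P') c c' ∧
      restr h.subset c' ∉ CofP SF P

/-- The transitions of a protocol over `SF` are pairs of distinct configurations
over `P` (values in `S(P)`). -/
def ProtocolWF {𝒜 𝒮 : Type*} (SF : Finset 𝒜 → Set 𝒮)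
    (T : (P : Finset 𝒜) → Set (({a // a ∈ P} → 𝒮) × ({a // a ∈ P} → 𝒮))) : Prop :=
  ∀ P : Finset 𝒜, P.Nonempty → ∀ dd ∈ T P,
    dd.1 ≠ dd.2 ∧ (∀ p, dd.1 p ∈ SF P) ∧ (∀ p, dd.2 p ∈ SF P)

/-- `f` is surjective on locals: for every nonempty finite `P`, `f` maps `S'(P)`
onto `S(P)`. -/
def SurjOnLocals {𝒜 𝒮 𝒮' : Type*} (f : 𝒮' → 𝒮)
    (SF' : Finset 𝒜 → Set 𝒮') (SF : Finset 𝒜 → Set 𝒮) : Prop :=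
  ∀ P : Finset 𝒜, P.Nonempty → f '' SF' P = SF P

/-- `f` is locality-reflecting: for all nonempty finite `P ⊊ P'` and every
`s ∈ S'(P')`, `f s ∈ S(P)` implies `s ∈ S'(P)`. -/
def LocalityReflecting {𝒜 𝒮 𝒮' : Type*} (f : 𝒮' → 𝒮)
    (SF' : Finset 𝒜 → Set 𝒮') (SF : Finset 𝒜 → Set 𝒮) : Prop :=
  ∀ P P' : Finset 𝒜, P.Nonempty → P ⊂ P' →
    ∀ s ∈ SF' P', f s ∈ SF P → s ∈ SF' P

/-- `f` is a backward simulation: for every nonempty finite `P` and every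
`(a, b) ∈ T'(P)`, either `π_P a = π_P b` or `(π_P a, π_P b) ∈ T(P)`. -/
def BackwardSim {𝒜 𝒮 𝒮' : Type*} (f : 𝒮' → 𝒮)
    (T' : (P : Finset 𝒜) → Set (({a // a ∈ P} → 𝒮') × ({a // a ∈ P} → 𝒮')))
    (T : (P : Finset 𝒜) → Set (({a // a ∈ P} → 𝒮) × ({a // a ∈ P} → 𝒮))) : Prop :=
  ∀ P : Finset 𝒜, P.Nonempty → ∀ ab ∈ T' P,
    (f ∘ ab.1 = f ∘ ab.2) ∨ (f ∘ ab.1, f ∘ ab.2) ∈ T P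

/-- `f` is a tight forward simulation: for every nonempty finite `P`, every
`(c, d) ∈ T(P)`, and every configuration `a ∈ C'(P)` with `π_P a = c`, there is a
computation of `F'(P)` from `a` to some `b` with `π_P b = d` such that every
configuration along the computation maps under `π_P` to `c` or to `d`. -/
def TightForwardSim {𝒜 𝒮 𝒮' : Type*} (f : 𝒮' → 𝒮)
    (SF' : Finset 𝒜 → Set 𝒮')
    (T' : (P : Finset 𝒜) → Set (({a // a ∈ P} → 𝒮') × ({a // a ∈ P} → 𝒮')))
    (T : (P : Finset 𝒜) → Set (({a // a ∈ P} → 𝒮) × ({a // a ∈ P} → 𝒮))) : Prop :=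
  ∀ P : Finset 𝒜, P.Nonempty → ∀ cd ∈ T P, ∀ a : {x // x ∈ P} → 𝒮',
    (∀ p, a p ∈ SF' P) → f ∘ a = cd.1 →
    ∃ l : List ({x // x ∈ P} → 𝒮'), l ≠ [] ∧
      l.Chain' (fun x y => (x, y) ∈ T' P) ∧
      l.head? = some a ∧
      (∃ b, l.getLast? = some b ∧ f ∘ b = cd.2) ∧
      (∀ x ∈ l, f ∘ x = cd.1 ∨ f ∘ x = cd.2)

/-- In a chain whose entries all satisfy `A` or `B`, starting in `A` and ending in `B`,
with `A` and `B` exclusive, some step goes from `A` to `B`. -/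
theorem exists_crossing_step {α : Type*} (R : α → α → Prop) (A B : α → Prop)
    (hAB : ∀ x, A x → ¬ B x) :
    ∀ (l : List α) (a b : α), List.IsChain R l → l.head? = some a → l.getLast? = some b →
      A a → B b → (∀ x ∈ l, A x ∨ B x) → ∃ x y, R x y ∧ A x ∧ B y := by
  intro l
  induction l with
  | nil => intro a b _ h; simp at h
  | cons u l ih =>
    intro a b hc hh hl ha hb hall
    simp only [List.head?_cons, Option.some.injEq] at hh
    subst hh
    cases l with
    | nil =>
      simp only [List.getLast?_singleton, Option.some.injEq] at hl
      subst hl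
      exact absurd hb (hAB _ ha)
    | cons v l =>
      rw [List.isChain_cons_cons] at hc
      rcases hall v (by simp) with hv | hv
      · exact ih v b hc.2 rfl (by simpa [List.getLast?_cons_cons] using hl) hv hb
          (fun x hx => hall x (List.mem_cons_of_mem _ hx))
      · exact ⟨u, v, hc.1, ha, hv⟩

/-- Implementation preserves obliviousness: let `F` be a protocol over local-states
function `SF` on `𝒮` (the specification) and `F'` a protocol over `SF'` on `𝒮'`
(the implementation), and let `f : 𝒮' → 𝒮` be an agentwise implementation mapping
(`f s0' = s0`) that is surjective on locals, a backward simulation, and a tight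
forward simulation. If `F'` is oblivious, then `F` is oblivious. -/
theorem implementation_preserves_oblivious
    {𝒜 𝒮 𝒮' : Type*} (s0 : 𝒮) (s0' : 𝒮')
    (SF : Finset 𝒜 → Set 𝒮) (SF' : Finset 𝒜 → Set 𝒮')
    (hs0 : ∀ P : Finset 𝒜, P.Nonempty → s0 ∈ SF P)
    (hmono : ∀ P P' : Finset 𝒜, P.Nonempty → P ⊆ P' → SF P ⊆ SF P')
    (hs0' : ∀ P : Finset 𝒜, P.Nonempty → s0' ∈ SF' P)
    (hmono' : ∀ P P' : Finset 𝒜, P.Nonempty → P ⊆ P' → SF' P ⊆ SF' P')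
    (T : (P : Finset 𝒜) → Set (({a // a ∈ P} → 𝒮) × ({a // a ∈ P} → 𝒮)))
    (T' : (P : Finset 𝒜) → Set (({a // a ∈ P} → 𝒮') × ({a // a ∈ P} → 𝒮')))
    (hT : ProtocolWF SF T) (hT' : ProtocolWF SF' T')
    (f : 𝒮' → 𝒮) (hf0 : f s0' = s0)
    (hsurj : SurjOnLocals f SF' SF)
    (hback : BackwardSim f T' T)
    (htight : TightForwardSim f SF' T' T)
    (hobl' : Oblivious SF' T') :
    Oblivious SF T := by
  classical
  intro P P' hP hPP' dd hdd
  simp only [Set.mem_iUnion] at hdd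
  obtain ⟨cd, hcd, h, hS, hag, hout⟩ := hdd
  obtain ⟨hne, hc1, hc2⟩ := hT P hP cd hcd
  have hP' : P'.Nonempty := hP.mono h
  have hlift : ∀ p, ∃ s ∈ SF' P, f s = cd.1 p := by
    intro p
    have hp := hc1 p
    rw [← hsurj P hP] at hp
    exact hp
  choose a ha hfa using hlift
  have hlift2 : ∀ p, ∃ s ∈ SF' P', f s = dd.1 p := by
    intro p
    have hp := (hS p).1
    rw [← hsurj P' hP'] at hp
    exact hp
  choose g hg hfg using hlift2
  obtain ⟨l, -, hch, hhead, ⟨b, hlast, hb⟩, hall⟩ := htight P hP cd hcd a ha (funext hfa)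
  obtain ⟨x, y, hxy, hx, hy⟩ := exists_crossing_step _ (fun z => f ∘ z = cd.1)
    (fun z => f ∘ z = cd.2) (fun z h1 h2 => hne (h1.symm.trans h2)) l a b hch hhead hlast
    (funext hfa) hb hall
  obtain ⟨-, hx', hy'⟩ := hT' P hP _ hxy
  let ext : ({a // a ∈ P} → 𝒮') → ({a // a ∈ P'} → 𝒮') :=
    fun z p => if hp : p.1 ∈ P then z ⟨p.1, hp⟩ else g p
  have hextS : ∀ z : {a // a ∈ P} → 𝒮', (∀ p, z p ∈ SF' P) → ∀ p, ext z p ∈ SF' P' := by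
    intro z hz p
    by_cases hp : p.1 ∈ P
    · simp only [ext, hp, dif_pos]
      exact hmono' P P' hP h (hz _)
    · simp only [ext, hp, dif_neg, not_false_eq_true]
      exact hg p
  have hmem : (ext x, ext y) ∈ T' P' := by
    apply hobl' P P' hP hPP'
    simp only [Set.mem_iUnion]
    refine ⟨(x, y), hxy, h, fun p => ⟨hextS x hx' p, hextS y hy' p⟩, fun q => ?_, fun p hp => ?_⟩
    · simp [ext]
    · simp [ext, hp]
  have e1 : f ∘ ext x = dd.1 := by
    funext p
    by_cases hp : p.1 ∈ P
    · have := congrFun hx ⟨p.1, hp⟩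
      simp only [Function.comp_apply, ext, hp, dif_pos] at this ⊢
      rw [this]
      exact (hag ⟨p.1, hp⟩).1.symm
    · simp only [Function.comp_apply, ext, hp, dif_neg, not_false_eq_true]
      exact hfg p
  have e2 : f ∘ ext y = dd.2 := by
    funext p
    by_cases hp : p.1 ∈ P
    · have := congrFun hy ⟨p.1, hp⟩
      simp only [Function.comp_apply, ext, hp, dif_pos] at this ⊢
      rw [this]
      exact (hag ⟨p.1, hp⟩).2.symm
    · simp only [Function.comp_apply, ext, hp, dif_neg, not_false_eq_true]
      rw [← hout p hp]
      exact hfg p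
  have hb' := hback P' hP' _ hmem
  simp only [e1, e2] at hb'
  rcases hb' with he | hm
  · exfalso
    apply hne
    funext q
    rw [← (hag q).1, ← (hag q).2, he]
  · exact hm
end

section
/- Implementation preserves interactivity: let F be a protocol over local-states function S on state type 𝒮 (the specification) and F' a protocol over local-states function S' on state type 𝒮' (the implementation), and let f : 𝒮' → 𝒮 be an agentwise implementation mapping that is surjective on locals, locality-reflecting, and a backward simulation. If F' is interactive, then F is interactive. -/
/-- Implementation preserves interactivity: let `F` be a protocol over local-states
function `SF` on `𝒮` (the specification) and `F'` a protocol over `SF'` on `𝒮'`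
(the implementation), and let `f : 𝒮' → 𝒮` be an agentwise implementation mapping
(`f s0' = s0`) that is surjective on locals, locality-reflecting, and a backward
simulation. If `F'` is interactive, then `F` is interactive. -/
theorem implementation_preserves_interactive
    {𝒜 𝒮 𝒮' : Type*} (s0 : 𝒮) (s0' : 𝒮')
    (SF : Finset 𝒜 → Set 𝒮) (SF' : Finset 𝒜 → Set 𝒮')
    (hs0 : ∀ P : Finset 𝒜, P.Nonempty → s0 ∈ SF P)
    (hmono : ∀ P P' : Finset 𝒜, P.Nonempty → P ⊆ P' → SF P ⊆ SF P')
    (hs0' : ∀ P : Finset 𝒜, P.Nonempty → s0' ∈ SF' P)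
    (hmono' : ∀ P P' : Finset 𝒜, P.Nonempty → P ⊆ P' → SF' P ⊆ SF' P')
    (T : (P : Finset 𝒜) → Set (({a // a ∈ P} → 𝒮) × ({a // a ∈ P} → 𝒮)))
    (T' : (P : Finset 𝒜) → Set (({a // a ∈ P} → 𝒮') × ({a // a ∈ P} → 𝒮')))
    (hT : ProtocolWF SF T) (hT' : ProtocolWF SF' T')
    (f : 𝒮' → 𝒮) (hf0 : f s0' = s0)
    (hsurj : SurjOnLocals f SF' SF)
    (hloc : LocalityReflecting f SF' SF)
    (hback : BackwardSim f T' T)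
    (hint' : Interactive SF' T') :
    Interactive SF T := by
  intro P P' hP h c hc hcP
  have hP' : P'.Nonempty := hP.mono h.subset
  have hlift : ∀ p, ∃ s, s ∈ SF' P' ∧ f s = c p := by
    intro p
    have hp : c p ∈ f '' SF' P' := by
      rw [hsurj P' hP']
      exact hc p
    exact hp
  choose a ha hfa using hlift
  have haP : restr h.subset a ∈ CofP SF' P := by
    intro p
    refine hloc P P' hP h _ (ha _) ?_
    unfold restr
    rw [hfa]
    exact hcP p
  obtain ⟨b, hab, hb⟩ := hint' P P' hP h a ha haP
  have hfac : f ∘ a = c := funext hfa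
  have key : Relation.ReflTransGen (fun x y => (x, y) ∈ T P') c (f ∘ b) ∧
      b ∈ CofP SF' P' := by
    clear hb
    induction hab with
    | refl =>
      rw [hfac]
      exact ⟨Relation.ReflTransGen.refl, ha⟩
    | tail _ hstep ih =>
      refine ⟨?_, (hT' P' hP' _ hstep).2.2⟩
      rcases hback P' hP' _ hstep with heq | htr
      · exact heq ▸ ih.1
      · exact ih.1.tail htr
  refine ⟨f ∘ b, key.1, fun hbP => hb fun p => ?_⟩
  exact hloc P P' hP h _ (key.2 _) (hbP p)
end

section
/- Implementations preserve the grassroots property: let F be a protocol over local-states function S on state type 𝒮 (the specification) and F' a protocol over local-states function S' on state type 𝒮' (the implementation), and let f : 𝒮' → 𝒮 be an agentwise implementation mapping that is surjective on locals, locality-reflecting, a backward simulation, and a tight forward simulation. If F' is grassroots (oblivious and interactive), then F is grassroots. -/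
theorem exists_step {α : Type*} (R : α → α → Prop) (p q : α → Prop) :
    ∀ (l : List α) (a b : α), l.IsChain R → l.head? = some a → l.getLast? = some b →
      p a → q b → (∀ x ∈ l, p x ∨ q x) → (∀ x, p x → ¬ q x) →
      ∃ x y, R x y ∧ p x ∧ q y
  | [], a, b, _, h, _, _, _, _, _ => by simp at h
  | [x], a, b, _, h, h', pa, qb, _, hd => by
      simp at h h'
      subst h; subst h'
      exact absurd qb (hd _ pa)
  | x :: y :: t, a, b, hc, h, h', pa, qb, hall, hd => by
      simp only [List.head?_cons, Option.some.injEq] at h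
      subst h
      rw [List.isChain_cons_cons] at hc
      rcases hall y (by simp) with hy | hy
      · exact exists_step R p q (y :: t) y b hc.2 rfl (by simpa using h') hy qb
          (fun z hz => hall z (List.mem_cons_of_mem _ hz)) hd
      · exact ⟨x, y, hc.1, pa, hy⟩

/-- Implementations preserve the grassroots property: let `F` be a protocol over
local-states function `SF` on `𝒮` (the specification) and `F'` a protocol over
`SF'` on `𝒮'` (the implementation), and let `f : 𝒮' → 𝒮` be an agentwise
implementation mapping (`f s0' = s0`) that is surjective on locals,
locality-reflecting, a backward simulation, and a tight forward simulation.
If `F'` is grassroots (oblivious and interactive), then `F` is grassroots. -/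
theorem implementation_preserves_grassroots
    {𝒜 𝒮 𝒮' : Type*} (s0 : 𝒮) (s0' : 𝒮')
    (SF : Finset 𝒜 → Set 𝒮) (SF' : Finset 𝒜 → Set 𝒮')
    (hs0 : ∀ P : Finset 𝒜, P.Nonempty → s0 ∈ SF P)
    (hmono : ∀ P P' : Finset 𝒜, P.Nonempty → P ⊆ P' → SF P ⊆ SF P')
    (hs0' : ∀ P : Finset 𝒜, P.Nonempty → s0' ∈ SF' P)
    (hmono' : ∀ P P' : Finset 𝒜, P.Nonempty → P ⊆ P' → SF' P ⊆ SF' P')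
    (T : (P : Finset 𝒜) → Set (({a // a ∈ P} → 𝒮) × ({a // a ∈ P} → 𝒮)))
    (T' : (P : Finset 𝒜) → Set (({a // a ∈ P} → 𝒮') × ({a // a ∈ P} → 𝒮')))
    (hT : ProtocolWF SF T) (hT' : ProtocolWF SF' T')
    (f : 𝒮' → 𝒮) (hf0 : f s0' = s0)
    (hsurj : SurjOnLocals f SF' SF)
    (hloc : LocalityReflecting f SF' SF)
    (hback : BackwardSim f T' T)
    (htight : TightForwardSim f SF' T' T)
    (hgrass' : Oblivious SF' T' ∧ Interactive SF' T') :
    Oblivious SF T ∧ Interactive SF T := by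
  classical
  obtain ⟨hobl, hinter⟩ := hgrass'
  have lifted : ∀ P : Finset 𝒜, P.Nonempty → ∀ d : {a // a ∈ P} → 𝒮, (∀ p, d p ∈ SF P) →
      ∃ a : {a // a ∈ P} → 𝒮', (∀ p, a p ∈ SF' P) ∧ f ∘ a = d := by
    intro P hP d hd
    have h1 : ∀ p, ∃ s ∈ SF' P, f s = d p := by
      intro p
      have h2 := hd p
      rw [← hsurj P hP] at h2
      exact h2
    choose a ha hfa using h1
    exact ⟨a, ha, funext hfa⟩
  constructor
  · intro P P' hP hPP' dd hdd
    have hP' : P'.Nonempty := hP.mono hPP'.subset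
    simp only [Set.mem_iUnion] at hdd
    obtain ⟨cc, hcc, hsub, hS, hag, hout⟩ := hdd
    obtain ⟨hne, hc1, hc2⟩ := hT P hP cc hcc
    obtain ⟨a, ha, hfa⟩ := lifted P' hP' dd.1 (fun p => (hS p).1)
    have hfa' : ∀ p, f (a p) = dd.1 p := fun p => congrFun hfa p
    have hr : f ∘ restr hsub a = cc.1 := by
      funext q
      exact (hfa' _).trans (hag q).1
    obtain ⟨l, -, hch, hhead, ⟨b, hlast, hb⟩, hall⟩ := htight P hP cc hcc (restr hsub a)
      (fun p => hloc P P' hP hPP' _ (ha _) (by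
        have h3 := congrFun hr p
        simp only [Function.comp] at h3
        rw [h3]; exact hc1 p)) hr
    obtain ⟨x, y, hxy, hx, hy⟩ := exists_step _ (fun x => f ∘ x = cc.1) (fun x => f ∘ x = cc.2)
      l _ _ hch hhead hlast hr hb hall (fun x h1 h2 => hne (h1.symm.trans h2))
    obtain ⟨-, hxS, hyS⟩ := hT' P hP _ hxy
    let extd : ({a // a ∈ P} → 𝒮') → ({a // a ∈ P'} → 𝒮') :=
      fun z p => if h : p.1 ∈ P then z ⟨p.1, h⟩ else a p
    have hextS : ∀ z : {a // a ∈ P} → 𝒮', (∀ p, z p ∈ SF' P) → ∀ p, extd z p ∈ SF' P' := by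
      intro z hz p
      by_cases h : p.1 ∈ P
      · simp only [extd, h, dif_pos]
        exact hmono' P P' hP hsub (hz _)
      · simp only [extd, h, dif_neg, not_false_iff]
        exact ha p
    have hmem : (extd x, extd y) ∈ T' P' := by
      apply hobl P P' hP hPP'
      simp only [Set.mem_iUnion]
      refine ⟨(x, y), hxy, hsub, fun p => ⟨hextS x hxS p, hextS y hyS p⟩, ?_, ?_⟩
      · intro q
        simp [extd]
      · intro p hp
        simp [extd, hp]
    have hex : f ∘ extd x = dd.1 := by
      funext p
      by_cases h : p.1 ∈ P
      · simp only [Function.comp, extd, h, dif_pos]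
        exact (congrFun hx ⟨p.1, h⟩).trans (hag ⟨p.1, h⟩).1.symm
      · simp only [Function.comp, extd, h, dif_neg, not_false_iff]
        exact hfa' p
    have hey : f ∘ extd y = dd.2 := by
      funext p
      by_cases h : p.1 ∈ P
      · simp only [Function.comp, extd, h, dif_pos]
        exact (congrFun hy ⟨p.1, h⟩).trans (hag ⟨p.1, h⟩).2.symm
      · simp only [Function.comp, extd, h, dif_neg, not_false_iff]
        exact (hfa' p).trans (hout p h)
    rcases hback P' hP' _ hmem with h | h
    · exfalso
      simp only [hex, hey] at h
      apply hne
      funext q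
      rw [← (hag q).1, ← (hag q).2, h]
    · simpa only [hex, hey] using h
  · intro P P' hP hPP' c hc hcr
    have hP' : P'.Nonempty := hP.mono hPP'.subset
    obtain ⟨a, ha, hfa⟩ := lifted P' hP' c hc
    have hrefl : ∀ z : {a // a ∈ P'} → 𝒮', (∀ p, z p ∈ SF' P') →
        restr hPP'.subset (f ∘ z) ∈ CofP SF P → restr hPP'.subset z ∈ CofP SF' P :=
      fun z hz h p => hloc P P' hP hPP' _ (hz _) (h p)
    obtain ⟨a', hsteps, ha'⟩ := hinter P P' hP hPP' a ha (hrefl a ha (by rw [hfa]; exact hcr))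
    have key : (∀ p, a' p ∈ SF' P') ∧
        Relation.ReflTransGen (fun a b => (a, b) ∈ T P') (f ∘ a) (f ∘ a') := by
      clear ha'
      induction hsteps with
      | refl => exact ⟨ha, .refl⟩
      | tail _ hs ih =>
        refine ⟨(hT' P' hP' _ hs).2.2, ?_⟩
        rcases hback P' hP' _ hs with h | h
        · simp only at h
          rw [← h]; exact ih.2
        · exact ih.2.tail h
    rw [hfa] at key
    exact ⟨f ∘ a', key.2, fun h => ha' (hrefl a' key.1 h)⟩
end
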